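/- arXiv:1204.3418 — 2 statements merged into one kernel-verified Lean document; each statement's English description precedes it below -/
import Mathlib

section
/- The function f(x) = 1 - e^{-x} on [0, ∞) is in class 𝒜: it is geometrically concave, i.e. (1 - e^{-x})(1 - e^{-y}) ≤ (1 - e^{-√(xy)})² for all x, y ≥ 0, and it satisfies 0 ≤ x f'(x) ≤ f(x) for all x ≥ 0, i.e. 0 ≤ x e^{-x} ≤ 1 - e^{-x}. -/
lemma aux_slope {a b : ℝ} (ha : 0 < a) (hab : a ≤ b) :
    b * (Real.exp a - 1) ≤ a * (Real.exp b - 1) := by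
  have hb : 0 < b := ha.trans_le hab
  have h := convexOn_exp.2 (Set.mem_univ 0) (Set.mem_univ b)
    (show 0 ≤ 1 - a / b by rw [sub_nonneg, div_le_one hb]; exact hab)
    (show 0 ≤ a / b by positivity) (by ring)
  simp only [smul_eq_mul, mul_zero, zero_add, Real.exp_zero, mul_one] at h
  rw [div_mul_cancel₀ _ hb.ne'] at h
  have h2 := mul_le_mul_of_nonneg_left h hb.le
  have h3 : b * (1 - a / b + a / b * Real.exp b) = b - a + a * Real.exp b := by
    field_simp
  linarith

lemma aux_pos {x : ℝ} (hx : 0 < x) : 0 < 1 - Real.exp (-x) := by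
  have : Real.exp (-x) < 1 := by
    rw [← Real.exp_zero]; exact Real.exp_lt_exp.2 (by linarith)
  linarith

lemma aux_deriv (t : ℝ) :
    HasDerivAt (fun t : ℝ => Real.log (1 - Real.exp (-Real.exp t)))
      (Real.exp t / (Real.exp (Real.exp t) - 1)) t := by
  have hp := aux_pos (Real.exp_pos t)
  have h := (((Real.hasDerivAt_exp t).neg.exp).const_sub 1).log hp.ne'
  have h1 : 0 < Real.exp (Real.exp t) - 1 := by
    have := Real.add_one_le_exp (Real.exp t)
    have := Real.exp_pos t
    linarith
  have key : Real.exp t / (Real.exp (Real.exp t) - 1) =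
      -(Real.exp (-Real.exp t) * -Real.exp t) / (1 - Real.exp (-Real.exp t)) := by
    rw [div_eq_div_iff h1.ne' hp.ne', Real.exp_neg]
    have := Real.exp_ne_zero (Real.exp t)
    field_simp
  rw [key]
  exact h

lemma aux_concave :
    ConcaveOn ℝ Set.univ (fun t : ℝ => Real.log (1 - Real.exp (-Real.exp t))) := by
  apply Antitone.concaveOn_univ_of_deriv
  · exact fun t => (aux_deriv t).differentiableAt
  · intro s t hst
    rw [(aux_deriv s).deriv, (aux_deriv t).deriv]
    have hpos : ∀ u : ℝ, 0 < Real.exp (Real.exp u) - 1 := fun u => by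
      have := Real.add_one_le_exp (Real.exp u)
      have := Real.exp_pos u
      linarith
    rw [div_le_div_iff₀ (hpos t) (hpos s)]
    exact aux_slope (Real.exp_pos s) (Real.exp_le_exp.2 hst)

lemma aux_geom {x y : ℝ} (hx : 0 < x) (hy : 0 < y) :
    (1 - Real.exp (-x)) * (1 - Real.exp (-y))
        ≤ (1 - Real.exp (-Real.sqrt (x * y))) ^ 2 := by
  have h := aux_concave.2 (Set.mem_univ (Real.log x)) (Set.mem_univ (Real.log y))
    (show (0 : ℝ) ≤ 1 / 2 by norm_num) (show (0 : ℝ) ≤ 1 / 2 by norm_num) (by norm_num)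
  have he : Real.exp (1 / 2 * Real.log x + 1 / 2 * Real.log y) = Real.sqrt (x * y) := by
    rw [← mul_add, ← Real.log_mul hx.ne' hy.ne', one_div_mul_eq_div, Real.exp_half,
      Real.exp_log (mul_pos hx hy)]
  simp only [smul_eq_mul, he, Real.exp_log hx, Real.exp_log hy] at h
  have px := aux_pos hx
  have py := aux_pos hy
  have pz := aux_pos (Real.sqrt_pos.2 (mul_pos hx hy))
  rw [← Real.log_le_log_iff (mul_pos px py) (pow_pos pz 2), Real.log_mul px.ne' py.ne',
    Real.log_pow]
  push_cast
  linarith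



/-- **Theorem.** The function `f(x) = 1 - e^{-x}` on `[0, ∞)` is in class 𝒜: it is
geometrically concave, i.e. `(1-e^{-x})(1-e^{-y}) ≤ (1-e^{-√(xy)})²` for all `x, y ≥ 0`, and
it satisfies `0 ≤ x f'(x) ≤ f(x)`, i.e. `0 ≤ x e^{-x} ≤ 1 - e^{-x}`, for all `x ≥ 0`. -/
theorem one_sub_exp_neg_mem_classA :
    (∀ x : ℝ, 0 ≤ x → ∀ y : ℝ, 0 ≤ y →
      (1 - Real.exp (-x)) * (1 - Real.exp (-y))
        ≤ (1 - Real.exp (-Real.sqrt (x * y))) ^ 2) ∧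
    (∀ x : ℝ, 0 ≤ x →
      0 ≤ x * Real.exp (-x) ∧ x * Real.exp (-x) ≤ 1 - Real.exp (-x)) := by

  refine ⟨fun x hx y hy => ?_, fun x hx => ⟨by positivity, ?_⟩⟩
  · rcases hx.eq_or_lt with rfl | hx
    · simp
    rcases hy.eq_or_lt with rfl | hy
    · simp
    exact aux_geom hx hy
  · have h := mul_le_mul_of_nonneg_right (Real.add_one_le_exp x) (Real.exp_pos (-x)).le
    rw [← Real.exp_add, add_neg_cancel, Real.exp_zero] at h
    linarith
end

section
/- Let w : [0, ∞) → [0, ∞) be a monotonically increasing geometrically convex function, and let x₁ ≥ x₂ ≥ … ≥ xₙ > 0 and y₁ ≥ y₂ ≥ … ≥ yₙ > 0 satisfy ∏_{j=1}^{k} x_j ≤ ∏_{j=1}^{k} y_j for all k = 1,…,n. Then ∏_{j=1}^{k} w(x_j) ≤ ∏_{j=1}^{k} w(y_j) for all k = 1,…,n; that is, a monotone geometrically convex function preserves log-submajorisation. -/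
/-- A monotone midpoint convex function on the line is convex. -/
lemma convexOn_of_monotone_midpoint (f : ℝ → ℝ) (hm : Monotone f)
    (hc : ∀ a b, f ((a + b) / 2) ≤ (f a + f b) / 2) : ConvexOn ℝ Set.univ f := by
  have key : ∀ a b, a ≤ b → ∀ t, 0 ≤ t → t ≤ 1 →
      f ((1 - t) * a + t * b) ≤ (1 - t) * f a + t * f b := by
    intro a b hab
    let g : ℝ → ℝ := fun t => f ((1 - t) * a + t * b) - ((1 - t) * f a + t * f b)
    have hfab := hm hab
    -- bounded above by `f b - f a`, then by halving
    have hbd : ∀ m : ℕ, ∀ t, 0 ≤ t → t ≤ 1 → g t ≤ (f b - f a) * (1 / 2) ^ m := by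
      intro m
      induction m with
      | zero =>
        intro t h0 h1
        have h2 : f ((1 - t) * a + t * b) ≤ f b := hm (by nlinarith)
        simp only [g, pow_zero, mul_one]
        nlinarith
      | succ m ih =>
        intro t h0 h1
        rcases le_total t (1 / 2) with ht | ht
        · have h2 := ih (2 * t) (by linarith) (by linarith)
          have h3 := hc a ((1 - 2 * t) * a + 2 * t * b)
          have e : (a + ((1 - 2 * t) * a + 2 * t * b)) / 2 = (1 - t) * a + t * b := by ring
          rw [e] at h3
          simp only [g] at h2 ⊢
          rw [pow_succ]
          linarith
        · have h2 := ih (2 * t - 1) (by linarith) (by linarith)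
          have h3 := hc b ((1 - (2 * t - 1)) * a + (2 * t - 1) * b)
          have e : (b + ((1 - (2 * t - 1)) * a + (2 * t - 1) * b)) / 2
              = (1 - t) * a + t * b := by ring
          rw [e] at h3
          simp only [g] at h2 ⊢
          rw [pow_succ]
          linarith
    intro t h0 h1
    have hlim : Filter.Tendsto (fun m : ℕ => (f b - f a) * (1 / 2 : ℝ) ^ m)
        Filter.atTop (nhds ((f b - f a) * 0)) :=
      (tendsto_pow_atTop_nhds_zero_of_lt_one (by norm_num) (by norm_num)).const_mul _
    have h2 : g t ≤ (f b - f a) * 0 := ge_of_tendsto' hlim (fun m => hbd m t h0 h1)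
    simp only [g] at h2
    linarith
  refine ⟨convex_univ, ?_⟩
  intro a _ b _ s t hs ht hst
  simp only [smul_eq_mul]
  rcases le_total a b with hab | hab
  · have h := key a b hab t ht (by linarith)
    rwa [show 1 - t = s by linarith] at h
  · have h := key b a hab s hs (by linarith)
    rw [show 1 - s = t by linarith] at h
    rw [add_comm (s * a), add_comm (s * f a)]
    exact h

/-- Monotone nonnegative subgradients of a monotone convex function. -/
lemma exists_subgradient (f : ℝ → ℝ) (hm : Monotone f) (hf : ConvexOn ℝ Set.univ f) :
    ∃ c : ℝ → ℝ, Monotone c ∧ (∀ a, 0 ≤ c a) ∧ ∀ a b, f a + c a * (b - a) ≤ f b := by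
  have hi : ∀ a : ℝ, a ∈ interior (Set.univ : Set ℝ) := by simp
  have hsub : ∀ a b, f a + derivWithin f (Set.Ioi a) a * (b - a) ≤ f b := by
    intro a b
    rcases lt_trichotomy a b with h | h | h
    · have h1 := hf.rightDeriv_le_slope_of_mem_interior (hi a) (Set.mem_univ b) h
      rw [slope_def_field, le_div_iff₀ (by linarith)] at h1
      linarith
    · subst h; simp
    · have h1 := hf.slope_le_leftDeriv_of_mem_interior (Set.mem_univ b) (hi a) h
      have h2 := h1.trans (hf.leftDeriv_le_rightDeriv_of_mem_interior (hi a))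
      rw [slope_def_field, div_le_iff₀ (by linarith)] at h2
      linarith
  refine ⟨fun a => derivWithin f (Set.Ioi a) a, ?_, ?_, hsub⟩
  · intro a b hab
    exact hf.monotoneOn_rightDeriv (hi a) (hi b) hab
  · intro a
    have h1 := hsub a (a - 1)
    have h2 : f (a - 1) ≤ f a := hm (by linarith)
    linarith

lemma filter_lt_succ {n k : ℕ} (hk : k < n) :
    (Finset.univ.filter (fun i : Fin n => (i : ℕ) < k + 1))
      = insert ⟨k, hk⟩ (Finset.univ.filter (fun i : Fin n => (i : ℕ) < k)) := by
  ext i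
  simp only [Finset.mem_filter, Finset.mem_univ, true_and, Finset.mem_insert, Fin.ext_iff]
  omega

lemma sum_filter_lt_succ {n k : ℕ} (hk : k < n) (g : Fin n → ℝ) :
    ∑ i ∈ Finset.univ.filter (fun i : Fin n => (i : ℕ) < k + 1), g i
      = g ⟨k, hk⟩ + ∑ i ∈ Finset.univ.filter (fun i : Fin n => (i : ℕ) < k), g i := by
  rw [filter_lt_succ hk, Finset.sum_insert (by simp)]

/-- Abel summation inequality. -/
lemma abel_ineq {n : ℕ} (c d : Fin n → ℝ) (hc : Antitone c)
    (hd : ∀ k : ℕ, 1 ≤ k → k ≤ n →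
      0 ≤ ∑ i ∈ Finset.univ.filter (fun i : Fin n => (i : ℕ) < k), d i) :
    ∀ k : ℕ, ∀ hk : k < n,
      c ⟨k, hk⟩ * ∑ i ∈ Finset.univ.filter (fun i : Fin n => (i : ℕ) < k + 1), d i
        ≤ ∑ i ∈ Finset.univ.filter (fun i : Fin n => (i : ℕ) < k + 1), c i * d i := by
  intro k
  induction k with
  | zero =>
    intro hk
    rw [sum_filter_lt_succ hk, sum_filter_lt_succ hk]
    simp
  | succ k ih =>
    intro hk
    have h1 := ih (by omega)
    have h2 := hd (k + 1) (by omega) (by omega)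
    have h3 : c ⟨k + 1, hk⟩ ≤ c ⟨k, by omega⟩ := hc (by simp)
    have h4 := mul_le_mul_of_nonneg_right h3 h2
    rw [sum_filter_lt_succ hk, sum_filter_lt_succ hk, mul_add]
    linarith

/-- **Lemma.** A monotonically increasing geometrically convex function
`w : [0, ∞) → [0, ∞)` preserves log-submajorisation: if `x₁ ≥ … ≥ xₙ > 0` and
`y₁ ≥ … ≥ yₙ > 0` satisfy `∏_{j≤k} x_j ≤ ∏_{j≤k} y_j` for all `k`, then
`∏_{j≤k} w(x_j) ≤ ∏_{j≤k} w(y_j)` for all `k`. -/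
theorem geomConvex_preserves_logSubmajorisation (w : ℝ → ℝ)
    (hw_nonneg : ∀ x : ℝ, 0 ≤ x → 0 ≤ w x)
    (hw_mono : MonotoneOn w (Set.Ici (0 : ℝ)))
    (hw_gconvex : ∀ x : ℝ, 0 ≤ x → ∀ y : ℝ, 0 ≤ y →
      w (Real.sqrt (x * y)) ≤ Real.sqrt (w x * w y))
    (n : ℕ) (x y : Fin n → ℝ)
    (hx_anti : Antitone x) (hy_anti : Antitone y)
    (hx_pos : ∀ i, 0 < x i) (hy_pos : ∀ i, 0 < y i)
    (hmaj : ∀ k : ℕ, 1 ≤ k → k ≤ n →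
      ∏ i ∈ Finset.univ.filter (fun i : Fin n => (i : ℕ) < k), x i
        ≤ ∏ i ∈ Finset.univ.filter (fun i : Fin n => (i : ℕ) < k), y i) :
    ∀ k : ℕ, 1 ≤ k → k ≤ n →
      ∏ i ∈ Finset.univ.filter (fun i : Fin n => (i : ℕ) < k), w (x i)
        ≤ ∏ i ∈ Finset.univ.filter (fun i : Fin n => (i : ℕ) < k), w (y i) := by
  intro k hk1 hkn
  by_cases hz : ∃ a : ℝ, 0 < a ∧ w a = 0
  · obtain ⟨a, ha, hwa⟩ := hz
    have hall : ∀ b : ℝ, 0 < b → w b = 0 := by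
      intro b hb
      have h1 := hw_gconvex a ha.le (b ^ 2 / a) (by positivity)
      rw [show a * (b ^ 2 / a) = b ^ 2 by field_simp, Real.sqrt_sq hb.le, hwa, zero_mul,
        Real.sqrt_zero] at h1
      exact le_antisymm h1 (hw_nonneg b hb.le)
    have hmem : (⟨0, by omega⟩ : Fin n) ∈
        Finset.univ.filter (fun i : Fin n => (i : ℕ) < k) := by
      simp only [Finset.mem_filter, Finset.mem_univ, true_and]; omega
    rw [Finset.prod_eq_zero hmem (hall _ (hx_pos _))]
    exact Finset.prod_nonneg (fun i _ => hw_nonneg _ (hy_pos i).le)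
  · have hpos : ∀ a : ℝ, 0 < a → 0 < w a := by
      intro a ha
      exact lt_of_le_of_ne (hw_nonneg a ha.le) (fun h => hz ⟨a, ha, h.symm⟩)
    let f : ℝ → ℝ := fun t => Real.log (w (Real.exp t))
    have hfm : Monotone f := by
      intro a b hab
      exact Real.log_le_log (hpos _ (Real.exp_pos _))
        (hw_mono (Real.exp_pos _).le (Real.exp_pos _).le (Real.exp_le_exp.2 hab))
    have hfc : ∀ a b, f ((a + b) / 2) ≤ (f a + f b) / 2 := by
      intro a b
      have pa := hpos _ (Real.exp_pos a)
      have pb := hpos _ (Real.exp_pos b)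
      have h1 := hw_gconvex _ (Real.exp_pos a).le _ (Real.exp_pos b).le
      rw [← Real.exp_add, ← Real.exp_half] at h1
      have h2 := Real.log_le_log (hpos _ (Real.exp_pos _)) h1
      rw [Real.log_sqrt (mul_pos pa pb).le, Real.log_mul pa.ne' pb.ne'] at h2
      exact h2
    obtain ⟨c, hcm, hc0, hcs⟩ := exists_subgradient f hfm (convexOn_of_monotone_midpoint f hfm hfc)
    have hd : ∀ k : ℕ, 1 ≤ k → k ≤ n →
        0 ≤ ∑ i ∈ Finset.univ.filter (fun i : Fin n => (i : ℕ) < k),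
          (Real.log (y i) - Real.log (x i)) := by
      intro k h1 h2
      have h3 := Real.log_le_log (Finset.prod_pos (fun i _ => hx_pos i)) (hmaj k h1 h2)
      rw [Real.log_prod (fun i _ => (hx_pos i).ne'),
        Real.log_prod (fun i _ => (hy_pos i).ne')] at h3
      rw [Finset.sum_sub_distrib]
      linarith
    obtain ⟨m, rfl⟩ : ∃ m, k = m + 1 := ⟨k - 1, by omega⟩
    have hab := abel_ineq (fun i => c (Real.log (x i))) _
      (fun i j hij => hcm (Real.log_le_log (hx_pos j) (hx_anti hij))) hd m (by omega)
    have h0 := (mul_nonneg (hc0 _) (hd (m + 1) hk1 hkn)).trans hab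
    have hfx : ∀ a, 0 < a → f (Real.log a) = Real.log (w a) := by
      intro a ha
      simp only [f, Real.exp_log ha]
    refine (Real.log_le_log_iff (Finset.prod_pos (fun i _ => hpos _ (hx_pos i)))
      (Finset.prod_pos (fun i _ => hpos _ (hy_pos i)))).1 ?_
    rw [Real.log_prod (fun i _ => (hpos _ (hx_pos i)).ne'),
      Real.log_prod (fun i _ => (hpos _ (hy_pos i)).ne'), ← sub_nonneg, ← Finset.sum_sub_distrib]
    refine h0.trans (Finset.sum_le_sum (fun i _ => ?_))
    have h5 := hcs (Real.log (x i)) (Real.log (y i))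
    rw [hfx _ (hx_pos i), hfx _ (hy_pos i)] at h5
    linarith
end
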